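/- arXiv:2408.07868 — 5 statements merged into one kernel-verified Lean document; each statement's English description precedes it below -/
import Mathlib

section
/- Suppose Φ : ℝ³ × ℂ → ℂ is smooth as a function of (x₁,x₂,x₃,Re λ,Im λ) and s : ℂ × ℝ → ℂ is such that s(λ,·) is differentiable for every λ ∈ ℂ. Assume (i) 𝓜_λΦ(·,λ) = 0 on ℝ³ for every λ ∈ ℂ; (ii) ∂_{λ̄}Φ(x,λ) = s(λ,x₃)·Φ(x,λ̄) for every x ∈ ℝ³ and λ ∈ ℂ; (iii) for every λ ∈ ℂ and every t ∈ ℝ there exists x ∈ ℝ³ with x₃ = t and Φ(x,λ̄) ≠ 0. Then the continuous scattering data evolves linearly: s(λ,x₃) = e^{(λ̄³−λ³)x₃}·s(λ,0) for all λ ∈ ℂ and all x₃ ∈ ℝ. -/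
open Complex MeasureTheory

noncomputable section

/-- Partial derivative in the first coordinate of `ℝ³ = ℝ × ℝ × ℝ`. -/
def p1 {E : Type*} [NormedAddCommGroup E] [NormedSpace ℝ E]
    (f : ℝ × ℝ × ℝ → E) (x : ℝ × ℝ × ℝ) : E :=
  deriv (fun t => f (t, x.2.1, x.2.2)) x.1

/-- Partial derivative in the second coordinate. -/
def p2 {E : Type*} [NormedAddCommGroup E] [NormedSpace ℝ E]
    (f : ℝ × ℝ × ℝ → E) (x : ℝ × ℝ × ℝ) : E :=
  deriv (fun t => f (x.1, t, x.2.2)) x.2.1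

/-- Partial derivative in the third coordinate. -/
def p3 {E : Type*} [NormedAddCommGroup E] [NormedSpace ℝ E]
    (f : ℝ × ℝ × ℝ → E) (x : ℝ × ℝ × ℝ) : E :=
  deriv (fun t => f (x.1, x.2.1, t)) x.2.2

/-- The Wirtinger derivative `∂_{λ̄} = (1/2)(∂_{λ_R} + i ∂_{λ_I})`. -/
def dbar (f : ℂ → ℂ) (l : ℂ) : ℂ :=
  (1 / 2) * (deriv (fun t : ℝ => f ⟨t, l.im⟩) l.re
    + Complex.I * deriv (fun t : ℝ => f ⟨l.re, t⟩) l.im)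

/-- The operator `𝓜_λΦ = −∂_{x₃}Φ + ∂³_{x₁}Φ + (3/2)u∂_{x₁}Φ + (3/4)(∂_{x₁}u)Φ
  + (3/4)wΦ − λ³Φ`. -/
def Mop (u w : ℝ × ℝ × ℝ → ℝ) (lam : ℂ) (Φ : ℝ × ℝ × ℝ → ℂ) (x : ℝ × ℝ × ℝ) : ℂ :=
  - p3 Φ x + p1 (p1 (p1 Φ)) x + (3 / 2 : ℂ) * (u x : ℂ) * p1 Φ x
    + (3 / 4 : ℂ) * (Complex.ofReal (p1 u x)) * Φ x + (3 / 4 : ℂ) * (w x : ℂ) * Φ x - lam ^ 3 * Φ x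

/-- Directional derivative. -/
def DD (v : (ℝ × ℝ × ℝ) × ℂ) (F : (ℝ × ℝ × ℝ) × ℂ → ℂ) (q : (ℝ × ℝ × ℝ) × ℂ) : ℂ :=
  fderiv ℝ F q v

lemma DD_smooth (v : (ℝ × ℝ × ℝ) × ℂ) {F : (ℝ × ℝ × ℝ) × ℂ → ℂ}
    (hF : ContDiff ℝ (⊤ : ℕ∞) F) : ContDiff ℝ (⊤ : ℕ∞) (DD v F) := by
  have h : ContDiff ℝ (⊤ : ℕ∞) (fderiv ℝ F) := hF.fderiv_right (by simp)
  exact h.clm_apply contDiff_const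

lemma DD_comm (v w : (ℝ × ℝ × ℝ) × ℂ) {F : (ℝ × ℝ × ℝ) × ℂ → ℂ}
    (hF : ContDiff ℝ (⊤ : ℕ∞) F) : DD v (DD w F) = DD w (DD v F) := by
  have h : ContDiff ℝ (⊤ : ℕ∞) (fderiv ℝ F) := hF.fderiv_right (by simp)
  have hd : Differentiable ℝ (fderiv ℝ F) := h.differentiable (by simp)
  have key : ∀ a b q, DD a (DD b F) q = fderiv ℝ (fderiv ℝ F) q a b := by
    intro a b q
    have h1 : HasFDerivAt (DD b F) _ q :=
      (hd q).hasFDerivAt.clm_apply (hasFDerivAt_const b q)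
    rw [DD, h1.fderiv]
    simp
  funext q
  rw [key, key]
  have hsym : IsSymmSndFDerivAt ℝ F q :=
    hF.contDiffAt.isSymmSndFDerivAt (by
      rw [minSmoothness_of_isRCLikeNormedField]
      exact WithTop.coe_le_coe.2 (le_top : (2 : ℕ∞) ≤ ⊤))
  exact hsym v w

lemma DD_comb (v : (ℝ × ℝ × ℝ) × ℂ) {G H : (ℝ × ℝ × ℝ) × ℂ → ℂ}
    (hG : ContDiff ℝ (⊤ : ℕ∞) G) (hH : ContDiff ℝ (⊤ : ℕ∞) H) :
    DD v (fun q => (1 / 2) * (G q + I * H q)) =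
      fun q => (1 / 2) * (DD v G q + I * DD v H q) := by
  funext q
  have h1 := (hG.differentiable (by simp) q).hasFDerivAt
  have h2 := (hH.differentiable (by simp) q).hasFDerivAt
  have h := (h1.add (h2.const_mul I)).const_mul (1 / 2 : ℂ)
  rw [DD]
  erw [h.fderiv]
  simp [DD]
  ring

lemma DD_curve {F : (ℝ × ℝ × ℝ) × ℂ → ℂ} (hF : ContDiff ℝ (⊤ : ℕ∞) F)
    {c : ℝ → (ℝ × ℝ × ℝ) × ℂ} {v : (ℝ × ℝ × ℝ) × ℂ} {t : ℝ} (hc : HasDerivAt c v t) :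
    HasDerivAt (fun r => F (c r)) (DD v F (c t)) t :=
  ((hF.differentiable (by simp) (c t)).hasFDerivAt).comp_hasDerivAt t hc

lemma curve_re (l : ℂ) : HasDerivAt (fun t : ℝ => (⟨t, l.im⟩ : ℂ)) 1 l.re := by
  have h : HasDerivAt (fun t : ℝ => (t : ℂ) + l.im * I) 1 l.re :=
    (Complex.ofRealCLM.hasDerivAt (x := l.re)).add_const _
  convert h using 2 with t
  apply Complex.ext <;> simp

lemma curve_im (l : ℂ) : HasDerivAt (fun t : ℝ => (⟨l.re, t⟩ : ℂ)) I l.im := by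
  have h : HasDerivAt (fun t : ℝ => (l.re : ℂ) + (t : ℂ) * I) (1 * I) l.im :=
    ((Complex.ofRealCLM.hasDerivAt (x := l.im)).mul_const I).const_add _
  rw [one_mul] at h
  convert h using 2 with t
  apply Complex.ext <;> simp

def vR : (ℝ × ℝ × ℝ) × ℂ := (0, 1)
def vI : (ℝ × ℝ × ℝ) × ℂ := (0, I)
def v1 : (ℝ × ℝ × ℝ) × ℂ := ((1, 0, 0), 0)
def v3 : (ℝ × ℝ × ℝ) × ℂ := ((0, 0, 1), 0)

lemma DD_re {F : (ℝ × ℝ × ℝ) × ℂ → ℂ} (hF : ContDiff ℝ (⊤ : ℕ∞) F) (x : ℝ × ℝ × ℝ) (l : ℂ) :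
    HasDerivAt (fun t : ℝ => F (x, ⟨t, l.im⟩)) (DD vR F (x, l)) l.re :=
  DD_curve hF ((hasDerivAt_const l.re x).prodMk (curve_re l))

lemma DD_im {F : (ℝ × ℝ × ℝ) × ℂ → ℂ} (hF : ContDiff ℝ (⊤ : ℕ∞) F) (x : ℝ × ℝ × ℝ) (l : ℂ) :
    HasDerivAt (fun t : ℝ => F (x, ⟨l.re, t⟩)) (DD vI F (x, l)) l.im :=
  DD_curve hF ((hasDerivAt_const l.im x).prodMk (curve_im l))

lemma DD_p1 {F : (ℝ × ℝ × ℝ) × ℂ → ℂ} (hF : ContDiff ℝ (⊤ : ℕ∞) F) (l : ℂ) :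
    p1 (fun y => F (y, l)) = fun x => DD v1 F (x, l) := by
  funext x
  have hc : HasDerivAt (fun t : ℝ => (((t, x.2.1, x.2.2), l) : (ℝ × ℝ × ℝ) × ℂ)) v1 x.1 :=
    ((hasDerivAt_id x.1).prodMk ((hasDerivAt_const x.1 x.2.1).prodMk
      (hasDerivAt_const x.1 x.2.2))).prodMk (hasDerivAt_const x.1 l)
  exact (DD_curve hF hc).deriv

lemma DD_p3 {F : (ℝ × ℝ × ℝ) × ℂ → ℂ} (hF : ContDiff ℝ (⊤ : ℕ∞) F) (l : ℂ) (x : ℝ × ℝ × ℝ) :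
    HasDerivAt (fun t => F ((x.1, x.2.1, t), l)) (DD v3 F (x, l)) x.2.2 := by
  have hc : HasDerivAt (fun t : ℝ => (((x.1, x.2.1, t), l) : (ℝ × ℝ × ℝ) × ℂ)) v3 x.2.2 :=
    ((hasDerivAt_const x.2.2 x.1).prodMk ((hasDerivAt_const x.2.2 x.2.1).prodMk
      (hasDerivAt_id x.2.2))).prodMk (hasDerivAt_const x.2.2 l)
  exact DD_curve hF hc

lemma DD_Mop (u w : ℝ × ℝ × ℝ → ℝ) {F : (ℝ × ℝ × ℝ) × ℂ → ℂ} (hF : ContDiff ℝ (⊤ : ℕ∞) F)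
    (l : ℂ) (x : ℝ × ℝ × ℝ) :
    Mop u w l (fun y => F (y, l)) x =
      - DD v3 F (x, l) + DD v1 (DD v1 (DD v1 F)) (x, l)
      + (3 / 2 : ℂ) * (u x : ℂ) * DD v1 F (x, l)
      + (3 / 4 : ℂ) * (Complex.ofReal (p1 u x)) * F (x, l)
      + (3 / 4 : ℂ) * (w x : ℂ) * F (x, l) - l ^ 3 * F (x, l) := by
  have h1 := DD_smooth v1 hF
  have h2 := DD_smooth v1 h1
  unfold Mop
  rw [DD_p1 hF l, DD_p1 h1 l, DD_p1 h2 l]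
  have : p3 (fun y => F (y, l)) x = DD v3 F (x, l) := (DD_p3 hF l x).deriv
  rw [this]

lemma Mop_curve (u w : ℝ × ℝ × ℝ → ℝ) {F : (ℝ × ℝ × ℝ) × ℂ → ℂ} (hF : ContDiff ℝ (⊤ : ℕ∞) F)
    (hM : ∀ l x, Mop u w l (fun y => F (y, l)) x = 0)
    (l : ℂ) (x : ℝ × ℝ × ℝ) (c : ℝ → ℂ) (v : ℂ) (t : ℝ) (hc : HasDerivAt c v t) (hct : c t = l)
    (V : (ℝ × ℝ × ℝ) × ℂ)
    (hV : ∀ G : (ℝ × ℝ × ℝ) × ℂ → ℂ, ContDiff ℝ (⊤ : ℕ∞) G →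
      HasDerivAt (fun r => G (x, c r)) (DD V G (x, l)) t) :
    - DD v3 (DD V F) (x, l) + DD v1 (DD v1 (DD v1 (DD V F))) (x, l)
      + (3 / 2 : ℂ) * (u x : ℂ) * DD v1 (DD V F) (x, l)
      + (3 / 4 : ℂ) * (Complex.ofReal (p1 u x)) * DD V F (x, l)
      + (3 / 4 : ℂ) * (w x : ℂ) * DD V F (x, l) - l ^ 3 * DD V F (x, l)
      = 3 * l ^ 2 * v * F (x, l) := by
  have h1 := DD_smooth v1 hF
  have h2 := DD_smooth v1 h1
  have h3 := DD_smooth v1 h2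
  have h := (((((hV _ (DD_smooth v3 hF)).neg.add (hV _ h3)).add
    ((hV _ h1).const_mul ((3 / 2 : ℂ) * (u x : ℂ)))).add
    ((hV _ hF).const_mul ((3 / 4 : ℂ) * (Complex.ofReal (p1 u x))))).add
    ((hV _ hF).const_mul ((3 / 4 : ℂ) * (w x : ℂ)))).sub ((hc.pow 3).mul (hV _ hF))
  have h0 := h.unique ((hasDerivAt_const t (0 : ℂ)).congr_of_eventuallyEq
    (Filter.Eventually.of_forall fun r => by
      have := hM (c r) x
      rw [DD_Mop u w hF] at this
      simpa using this))
  rw [DD_comm V v3 hF, DD_comm V v1 h2, DD_comm V v1 h1, DD_comm V v1 hF] at h0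
  simp only [Pi.pow_apply, hct] at h0
  norm_num at h0
  linear_combination h0

/-- Linear evolution of the continuous scattering data:
`s(λ,x₃) = e^{(λ̄³−λ³)x₃} s(λ,0)`. -/
theorem continuous_scattering_data_evolves_linearly
    (u w : ℝ × ℝ × ℝ → ℝ) (hu : ContDiff ℝ (⊤ : ℕ∞) u) (hw : ContDiff ℝ (⊤ : ℕ∞) w)
    (huw : ∀ x, p1 w x = p2 u x)
    (Φ : ℝ × ℝ × ℝ → ℂ → ℂ)
    (hΦ : ContDiff ℝ (⊤ : ℕ∞) (fun q : (ℝ × ℝ × ℝ) × ℂ => Φ q.1 q.2))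
    (s : ℂ → ℝ → ℂ)
    (hs : ∀ lam : ℂ, Differentiable ℝ (s lam))
    (hLax : ∀ lam : ℂ, ∀ x : ℝ × ℝ × ℝ, Mop u w lam (fun y => Φ y lam) x = 0)
    (hdbar : ∀ x : ℝ × ℝ × ℝ, ∀ lam : ℂ,
      dbar (fun μ => Φ x μ) lam = s lam x.2.2 * Φ x ((starRingEnd ℂ) lam))
    (hnz : ∀ lam : ℂ, ∀ t : ℝ,
      ∃ x : ℝ × ℝ × ℝ, x.2.2 = t ∧ Φ x ((starRingEnd ℂ) lam) ≠ 0) :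
    ∀ lam : ℂ, ∀ t : ℝ,
      s lam t = Complex.exp ((((starRingEnd ℂ) lam) ^ 3 - lam ^ 3) * t) * s lam 0 := by
  intro lam
  set F : (ℝ × ℝ × ℝ) × ℂ → ℂ := fun q => Φ q.1 q.2 with hFdef
  have hR := DD_smooth vR hΦ
  have hI := DD_smooth vI hΦ
  set W : (ℝ × ℝ × ℝ) × ℂ → ℂ := fun q => (1 / 2) * (DD vR F q + I * DD vI F q) with hW
  have hWs : ContDiff ℝ (⊤ : ℕ∞) W :=
    contDiff_const.mul (hR.add (contDiff_const.mul hI))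
  have hM : ∀ l x, Mop u w l (fun y => F (y, l)) x = 0 := hLax
  have hWM : ∀ x, Mop u w lam (fun y => W (y, lam)) x = 0 := by
    intro x
    have a := Mop_curve u w hΦ hM lam x _ _ _ (curve_re lam) rfl vR (fun G hG => DD_re hG x lam)
    have b := Mop_curve u w hΦ hM lam x _ _ _ (curve_im lam) rfl vI (fun G hG => DD_im hG x lam)
    rw [DD_Mop u w hWs]
    have e3 := DD_comb v3 hR hI
    have e1 := DD_comb v1 hR hI
    have e11 := DD_comb v1 (DD_smooth v1 hR) (DD_smooth v1 hI)
    have e111 := DD_comb v1 (DD_smooth v1 (DD_smooth v1 hR)) (DD_smooth v1 (DD_smooth v1 hI))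
    rw [hW, e3, e1, e11, e111]
    linear_combination (1 / 2) * a + (1 / 2) * I * b + 3 / 2 * lam ^ 2 * F (x, lam) * I_sq
  have hWeq : (fun y => W (y, lam)) =
      fun y : ℝ × ℝ × ℝ => s lam y.2.2 * F (y, (starRingEnd ℂ) lam) := by
    funext y
    rw [← hdbar y lam, dbar]
    have a := (DD_re hΦ y lam).deriv
    have b := (DD_im hΦ y lam).deriv
    rw [a, b]
  have hode : ∀ t, deriv (s lam) t = (((starRingEnd ℂ) lam) ^ 3 - lam ^ 3) * s lam t := by
    intro t
    obtain ⟨x, rfl, hx⟩ := hnz lam t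
    have a := hWM x
    have b := hM ((starRingEnd ℂ) lam) x
    rw [hWeq] at a
    have mulp1 : ∀ G : ℝ × ℝ × ℝ → ℂ, p1 (fun y : ℝ × ℝ × ℝ => s lam y.2.2 * G y) =
        fun y => s lam y.2.2 * p1 G y := by
      intro G
      funext y
      simp only [p1]
      exact deriv_const_mul_field _
    have mulp3 : p3 (fun y : ℝ × ℝ × ℝ => s lam y.2.2 * F (y, (starRingEnd ℂ) lam)) x =
        deriv (s lam) x.2.2 * F (x, (starRingEnd ℂ) lam)
          + s lam x.2.2 * p3 (fun y => F (y, (starRingEnd ℂ) lam)) x := by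
      have h := DD_p3 hΦ ((starRingEnd ℂ) lam) x
      have hder : p3 (fun y => F (y, (starRingEnd ℂ) lam)) x = _ := h.deriv
      rw [hder]
      exact ((hs lam x.2.2).hasDerivAt.mul h).deriv
    unfold Mop at a b
    rw [mulp1, mulp1, mulp1, mulp3] at a
    have hxne : F (x, (starRingEnd ℂ) lam) ≠ 0 := hx
    apply mul_right_cancel₀ hxne
    linear_combination s lam x.2.2 * b - a
  set k : ℂ := ((starRingEnd ℂ) lam) ^ 3 - lam ^ 3
  have hE : ∀ t : ℝ, HasDerivAt (fun t : ℝ => Complex.exp (-k * t)) (Complex.exp (-k * t) * (-k * 1)) t := by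
    intro t
    exact ((Complex.ofRealCLM.hasDerivAt (x := t)).const_mul (-k)).cexp
  have hg : ∀ t : ℝ, HasDerivAt (fun t : ℝ => Complex.exp (-k * t) * s lam t) 0 t := by
    intro t
    have h := (hE t).mul (hs lam t).hasDerivAt
    rw [hode t] at h
    exact h.congr_deriv (by ring)
  intro t
  have hc := is_const_of_deriv_eq_zero (fun t => (hg t).differentiableAt)
    (fun t => (hg t).deriv) t 0
  simp only [Complex.ofReal_zero, mul_zero, Complex.exp_zero, one_mul] at hc
  rw [← hc, ← mul_assoc, ← Complex.exp_add]
  simp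
end
end

section
/- Let κ₁ ≠ κ₂ be real numbers. Suppose Φ(·,κ₁), Φ(·,κ₂) : ℝ³ → ℂ are smooth with 𝓜_{κ₁}Φ(·,κ₁) = 0 and 𝓜_{κ₂}Φ(·,κ₂) = 0 on ℝ³, and D : ℝ → ℂ is differentiable with −κ₁Φ(x,κ₁) = D(x₃)·Φ(x,κ₂) for all x ∈ ℝ³. If for every t ∈ ℝ there exists x ∈ ℝ³ with x₃ = t and Φ(x,κ₂) ≠ 0, then the discrete scattering data evolves linearly: D(x₃) = e^{(κ₂³−κ₁³)x₃}·D(0) for all x₃ ∈ ℝ. -/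
open Complex MeasureTheory

noncomputable section

lemma p1_rel (a : ℂ) (D : ℝ → ℂ) (f g : ℝ × ℝ × ℝ → ℂ)
    (h : ∀ x : ℝ × ℝ × ℝ, a * f x = D x.2.2 * g x) (x : ℝ × ℝ × ℝ) :
    a * p1 f x = D x.2.2 * p1 g x := by
  unfold p1
  rw [← deriv_const_mul_field, ← deriv_const_mul_field]
  congr 1
  funext t
  exact h (t, x.2.1, x.2.2)

lemma p3_rel (a : ℂ) (D : ℝ → ℂ) (hD : Differentiable ℝ D) (f g : ℝ × ℝ × ℝ → ℂ)
    (hg : Differentiable ℝ g)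
    (h : ∀ x : ℝ × ℝ × ℝ, a * f x = D x.2.2 * g x) (x : ℝ × ℝ × ℝ) :
    a * p3 f x = deriv D x.2.2 * g x + D x.2.2 * p3 g x := by
  unfold p3
  have hg' : Differentiable ℝ (fun t : ℝ => g (x.1, x.2.1, t)) :=
    hg.comp (by fun_prop : Differentiable ℝ (fun t : ℝ => (x.1, x.2.1, t)))
  have e : (fun t : ℝ => a * f (x.1, x.2.1, t)) = fun t => D t * g (x.1, x.2.1, t) := by
    funext t
    exact h (x.1, x.2.1, t)
  rw [← deriv_const_mul_field, e]
  exact ((hD x.2.2).hasDerivAt.mul (hg' x.2.2).hasDerivAt).deriv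

/-- Linear evolution of the discrete scattering data:
`D(x₃) = e^{(κ₂³−κ₁³)x₃} D(0)`. -/
theorem discrete_scattering_data_evolves_linearly
    (u w : ℝ × ℝ × ℝ → ℝ) (hu : ContDiff ℝ (⊤ : ℕ∞) u) (hw : ContDiff ℝ (⊤ : ℕ∞) w)
    (huw : ∀ x, p1 w x = p2 u x)
    (κ₁ κ₂ : ℝ) (hκ : κ₁ ≠ κ₂)
    (Φ₁ Φ₂ : ℝ × ℝ × ℝ → ℂ)
    (hΦ₁ : ContDiff ℝ (⊤ : ℕ∞) Φ₁) (hΦ₂ : ContDiff ℝ (⊤ : ℕ∞) Φ₂)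
    (hLax₁ : ∀ x : ℝ × ℝ × ℝ, Mop u w (κ₁ : ℂ) Φ₁ x = 0)
    (hLax₂ : ∀ x : ℝ × ℝ × ℝ, Mop u w (κ₂ : ℂ) Φ₂ x = 0)
    (D : ℝ → ℂ) (hD : Differentiable ℝ D)
    (hsym : ∀ x : ℝ × ℝ × ℝ, -(κ₁ : ℂ) * Φ₁ x = D x.2.2 * Φ₂ x)
    (hnz : ∀ t : ℝ, ∃ x : ℝ × ℝ × ℝ, x.2.2 = t ∧ Φ₂ x ≠ 0) :
    ∀ t : ℝ, D t = Complex.exp (((κ₂ : ℂ) ^ 3 - (κ₁ : ℂ) ^ 3) * t) * D 0 := by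
  have hode : ∀ t, deriv D t = ((κ₂ : ℂ) ^ 3 - (κ₁ : ℂ) ^ 3) * D t := by
    intro t
    obtain ⟨x, rfl, hx⟩ := hnz t
    have h1 := p1_rel _ D _ _ hsym
    have h111 := p1_rel _ D _ _ (p1_rel _ D _ _ h1)
    have h3 := p3_rel _ D hD _ _ (hΦ₂.differentiable (by simp)) hsym x
    have l1 := hLax₁ x
    have l2 := hLax₂ x
    unfold Mop at l1 l2
    have e1 := h1 x
    have e3 := h111 x
    have e0 := hsym x
    apply mul_right_cancel₀ hx
    linear_combination (κ₁ : ℂ) * l1 + D x.2.2 * l2 - h3 + e3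
      + (3 / 2 : ℂ) * (u x : ℂ) * e1
      + ((3 / 4 : ℂ) * (Complex.ofReal (p1 u x)) + (3 / 4 : ℂ) * (w x : ℂ) - (κ₁ : ℂ) ^ 3) * e0
  set c : ℂ := (κ₂ : ℂ) ^ 3 - (κ₁ : ℂ) ^ 3 with hc
  have hE : ∀ t : ℝ, HasDerivAt (fun s : ℝ => Complex.exp (-(c * s)))
      (Complex.exp (-(c * t)) * (-(c * 1))) t := fun t =>
    ((Complex.ofRealCLM.hasDerivAt (x := t)).const_mul c).neg.cexp
  have hF : ∀ t : ℝ, HasDerivAt (fun s : ℝ => Complex.exp (-(c * s)) * D s) 0 t := by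
    intro t
    have hz : Complex.exp (-(c * t)) * (-(c * 1)) * D t
        + Complex.exp (-(c * t)) * deriv D t = 0 := by
      rw [hode t]
      ring
    rw [← hz]
    exact (hE t).mul (hD t).hasDerivAt
  intro t
  have hconst := is_const_of_deriv_eq_zero (fun t => (hF t).differentiableAt)
    (fun t => (hF t).deriv) t 0
  simp only [Complex.ofReal_zero, mul_zero, neg_zero, Complex.exp_zero, one_mul] at hconst
  rw [← hconst, ← mul_assoc, ← Complex.exp_add]
  simp
end
end

section
/- For every λ ∈ ℂ∖{0} and every x ∈ ℝ³ one has (−∂_{x₂} + ∂²_{x₁} + 2λ∂_{x₁} + u_s(x))χ(x,λ) = 0, and consequently the Sato eigenfunction φ(x,λ) = e^{λx₁+λ²x₂}χ(x,λ) satisfies (−∂_{x₂} + ∂²_{x₁} + u_s(x))φ(x,λ) = 0 (all derivatives in x₁, x₂ with x₃ held fixed). -/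
open Complex

noncomputable section

/-- `θⱼ(x) = κⱼx₁ + κⱼ²x₂ + κⱼ³x₃`. -/
def theta (κ : ℝ) (x : ℝ × ℝ × ℝ) : ℝ :=
  κ * x.1 + κ ^ 2 * x.2.1 + κ ^ 3 * x.2.2

/-- `τ(x) = e^{θ₁(x)} + a e^{θ₂(x)}`. -/
def tau (κ₁ κ₂ a : ℝ) (x : ℝ × ℝ × ℝ) : ℝ :=
  Real.exp (theta κ₁ x) + a * Real.exp (theta κ₂ x)

/-- The `Gr(1,2)_{>0}` KP line soliton `u_s = 2∂²_{x₁} ln τ`. -/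
def us (κ₁ κ₂ a : ℝ) (x : ℝ × ℝ × ℝ) : ℝ :=
  2 * p1 (p1 (fun y => Real.log (tau κ₁ κ₂ a y))) x

/-- The Sato normalized eigenfunction. -/
def chi (κ₁ κ₂ a : ℝ) (x : ℝ × ℝ × ℝ) (lam : ℂ) : ℂ :=
  ((1 - (κ₁ : ℂ) / lam) * Real.exp (theta κ₁ x)
    + (1 - (κ₂ : ℂ) / lam) * (a : ℂ) * Real.exp (theta κ₂ x)) / (tau κ₁ κ₂ a x : ℂ)

/-- The Sato eigenfunction `φ(x,λ) = e^{λx₁+λ²x₂} χ(x,λ)`. -/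
def satoPhi (κ₁ κ₂ a : ℝ) (x : ℝ × ℝ × ℝ) (lam : ℂ) : ℂ :=
  Complex.exp (lam * x.1 + lam ^ 2 * x.2.1) * chi κ₁ κ₂ a x lam

/-- Complex-valued exponential `e^{θ(x)}`. -/
def ee (κ : ℝ) (x : ℝ × ℝ × ℝ) : ℂ := ((Real.exp (theta κ x) : ℝ) : ℂ)

lemma hr1 (κ : ℝ) (t q r : ℝ) :
    HasDerivAt (fun t : ℝ => Real.exp (theta κ (t, q, r)))
      (κ * Real.exp (theta κ (t, q, r))) t := by
  have h : HasDerivAt (fun t : ℝ => theta κ (t, q, r)) κ t := by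
    unfold theta
    simpa using (((hasDerivAt_id t).const_mul κ).add_const (κ ^ 2 * q)).add_const (κ ^ 3 * r)
  simpa [mul_comm] using h.exp

lemma hr2 (κ : ℝ) (p t r : ℝ) :
    HasDerivAt (fun t : ℝ => Real.exp (theta κ (p, t, r)))
      (κ ^ 2 * Real.exp (theta κ (p, t, r))) t := by
  have h : HasDerivAt (fun t : ℝ => theta κ (p, t, r)) (κ ^ 2) t := by
    unfold theta
    simpa using (((hasDerivAt_id t).const_mul (κ ^ 2)).const_add (κ * p)).add_const (κ ^ 3 * r)
  simpa [mul_comm] using h.exp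

lemma he1 (κ : ℝ) (t q r : ℝ) :
    HasDerivAt (fun t : ℝ => ee κ (t, q, r)) (κ * ee κ (t, q, r)) t := by
  have := (hr1 κ t q r).ofReal_comp
  simpa [ee] using this

lemma he2 (κ : ℝ) (p t r : ℝ) :
    HasDerivAt (fun t : ℝ => ee κ (p, t, r)) ((κ : ℂ) ^ 2 * ee κ (p, t, r)) t := by
  have := (hr2 κ p t r).ofReal_comp
  simpa [ee] using this

lemma tau_pos' (κ₁ κ₂ a : ℝ) (ha : 0 < a) (x : ℝ × ℝ × ℝ) : 0 < tau κ₁ κ₂ a x := by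
  unfold tau; positivity

/-- Complex form of `τ`. -/
def tc (κ₁ κ₂ a : ℝ) (x : ℝ × ℝ × ℝ) : ℂ := ee κ₁ x + a * ee κ₂ x

lemma tau_eq_tc (κ₁ κ₂ a : ℝ) (x : ℝ × ℝ × ℝ) : (tau κ₁ κ₂ a x : ℂ) = tc κ₁ κ₂ a x := by
  unfold tau tc ee; push_cast; rfl

lemma tc_ne (κ₁ κ₂ a : ℝ) (ha : 0 < a) (x : ℝ × ℝ × ℝ) : tc κ₁ κ₂ a x ≠ 0 := by
  rw [← tau_eq_tc]; exact_mod_cast (tau_pos' κ₁ κ₂ a ha x).ne'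

lemma chi_eq (κ₁ κ₂ a : ℝ) (x : ℝ × ℝ × ℝ) (lam : ℂ) : chi κ₁ κ₂ a x lam =
    ((1 - (κ₁ : ℂ) / lam) * ee κ₁ x + (1 - (κ₂ : ℂ) / lam) * (a : ℂ) * ee κ₂ x)
      / tc κ₁ κ₂ a x := by
  rw [← tau_eq_tc]; rfl

lemma us_eq (κ₁ κ₂ a : ℝ) (ha : 0 < a) (x : ℝ × ℝ × ℝ) : (us κ₁ κ₂ a x : ℂ) =
    2 * (κ₂ - κ₁) ^ 2 * a * ee κ₁ x * ee κ₂ x / tc κ₁ κ₂ a x ^ 2 := by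
  have h1 : p1 (fun y => Real.log (tau κ₁ κ₂ a y)) = fun y =>
      (κ₁ * Real.exp (theta κ₁ y) + a * (κ₂ * Real.exp (theta κ₂ y))) / tau κ₁ κ₂ a y := by
    funext ⟨p, q, r⟩
    exact (((hr1 κ₁ p q r).add ((hr1 κ₂ p q r).const_mul a)).log
      (tau_pos' κ₁ κ₂ a ha (p, q, r)).ne').deriv
  obtain ⟨p, q, r⟩ := x
  have h2 := ((((hr1 κ₁ p q r).const_mul κ₁).add
    (((hr1 κ₂ p q r).const_mul κ₂).const_mul a)).div
      ((hr1 κ₁ p q r).add ((hr1 κ₂ p q r).const_mul a))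
      (tau_pos' κ₁ κ₂ a ha (p, q, r)).ne').deriv
  have h3 : us κ₁ κ₂ a (p, q, r) = 2 * (κ₂ - κ₁) ^ 2 * a * Real.exp (theta κ₁ (p, q, r)) *
      Real.exp (theta κ₂ (p, q, r)) / tau κ₁ κ₂ a (p, q, r) ^ 2 := by
    unfold us
    rw [h1]
    refine (congrArg (2 * ·) h2).trans ?_
    have := (tau_pos' κ₁ κ₂ a ha (p, q, r)).ne'
    simp only [Pi.add_apply, tau] at this ⊢
    field_simp
    ring
  rw [h3, ← tau_eq_tc]; unfold ee; push_cast; rfl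

/-- First `x₁`-derivative of `χ`. -/
def c1 (κ₁ κ₂ a : ℝ) (lam : ℂ) (x : ℝ × ℝ × ℝ) : ℂ :=
  -((κ₂ - κ₁) ^ 2 / lam * a) * (ee κ₁ x * ee κ₂ x) / tc κ₁ κ₂ a x ^ 2

/-- Second `x₁`-derivative of `χ`. -/
def c11 (κ₁ κ₂ a : ℝ) (lam : ℂ) (x : ℝ × ℝ × ℝ) : ℂ :=
  -((κ₂ - κ₁) ^ 2 / lam * a) * (ee κ₁ x * ee κ₂ x) *
    ((κ₁ + κ₂) / tc κ₁ κ₂ a x ^ 2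
      - 2 * (κ₁ * ee κ₁ x + a * (κ₂ * ee κ₂ x)) / tc κ₁ κ₂ a x ^ 3)

lemma htc1 (κ₁ κ₂ a : ℝ) (t q r : ℝ) :
    HasDerivAt (fun t : ℝ => tc κ₁ κ₂ a (t, q, r))
      (κ₁ * ee κ₁ (t, q, r) + a * (κ₂ * ee κ₂ (t, q, r))) t :=
  (he1 κ₁ t q r).add ((he1 κ₂ t q r).const_mul (a : ℂ))

lemma htc2 (κ₁ κ₂ a : ℝ) (p t r : ℝ) :
    HasDerivAt (fun t : ℝ => tc κ₁ κ₂ a (p, t, r))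
      ((κ₁ : ℂ) ^ 2 * ee κ₁ (p, t, r) + a * ((κ₂ : ℂ) ^ 2 * ee κ₂ (p, t, r))) t :=
  (he2 κ₁ p t r).add ((he2 κ₂ p t r).const_mul (a : ℂ))

lemma hchi1 (κ₁ κ₂ a : ℝ) (ha : 0 < a) (lam : ℂ) (hl : lam ≠ 0) (t q r : ℝ) :
    HasDerivAt (fun t : ℝ => chi κ₁ κ₂ a (t, q, r) lam) (c1 κ₁ κ₂ a lam (t, q, r)) t := by
  simp only [chi_eq]
  have hn := tc_ne κ₁ κ₂ a ha (t, q, r)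
  refine ((((he1 κ₁ t q r).const_mul (1 - (κ₁ : ℂ) / lam)).add
    ((he1 κ₂ t q r).const_mul ((1 - (κ₂ : ℂ) / lam) * (a : ℂ)))).div
      (htc1 κ₁ κ₂ a t q r) hn).congr_deriv ?_
  simp only [c1, Pi.add_apply]
  field_simp
  simp only [tc]
  ring

lemma hchi2 (κ₁ κ₂ a : ℝ) (ha : 0 < a) (lam : ℂ) (hl : lam ≠ 0) (p t r : ℝ) :
    HasDerivAt (fun t : ℝ => chi κ₁ κ₂ a (p, t, r) lam)
      ((κ₁ + κ₂) * c1 κ₁ κ₂ a lam (p, t, r)) t := by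
  simp only [chi_eq]
  have hn := tc_ne κ₁ κ₂ a ha (p, t, r)
  refine ((((he2 κ₁ p t r).const_mul (1 - (κ₁ : ℂ) / lam)).add
    ((he2 κ₂ p t r).const_mul ((1 - (κ₂ : ℂ) / lam) * (a : ℂ)))).div
      (htc2 κ₁ κ₂ a p t r) hn).congr_deriv ?_
  simp only [c1, Pi.add_apply]
  field_simp
  simp only [tc]
  ring

lemma hchi11 (κ₁ κ₂ a : ℝ) (ha : 0 < a) (lam : ℂ) (hl : lam ≠ 0) (t q r : ℝ) :
    HasDerivAt (fun t : ℝ => c1 κ₁ κ₂ a lam (t, q, r)) (c11 κ₁ κ₂ a lam (t, q, r)) t := by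
  have hn := tc_ne κ₁ κ₂ a ha (t, q, r)
  refine ((((he1 κ₁ t q r).mul (he1 κ₂ t q r)).const_mul
    (-(((κ₂ : ℂ) - κ₁) ^ 2 / lam * a))).div
      ((htc1 κ₁ κ₂ a t q r).pow 2) (pow_ne_zero 2 hn)).congr_deriv ?_
  simp only [c11, Pi.mul_apply, Pi.pow_apply]
  field_simp
  push_cast
  ring

lemma lax_alg (κ₁ κ₂ a : ℝ) (ha : 0 < a) (lam : ℂ) (hl : lam ≠ 0) (x : ℝ × ℝ × ℝ) :
    -((κ₁ + κ₂) * c1 κ₁ κ₂ a lam x) + c11 κ₁ κ₂ a lam x + 2 * lam * c1 κ₁ κ₂ a lam x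
      + (us κ₁ κ₂ a x : ℂ) * chi κ₁ κ₂ a x lam = 0 := by
  have hn := tc_ne κ₁ κ₂ a ha x
  rw [us_eq κ₁ κ₂ a ha, chi_eq, c1, c11]
  field_simp
  simp only [tc]
  ring

lemma hE1 (lam : ℂ) (t q : ℝ) :
    HasDerivAt (fun t : ℝ => Complex.exp (lam * t + lam ^ 2 * q))
      (Complex.exp (lam * t + lam ^ 2 * q) * lam) t := by
  have h : HasDerivAt (fun t : ℝ => lam * (t : ℂ) + lam ^ 2 * q) lam t := by
    simpa using ((hasDerivAt_id t).ofReal_comp.const_mul lam).add_const (lam ^ 2 * (q : ℂ))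
  exact h.cexp

lemma hE2 (lam : ℂ) (p t : ℝ) :
    HasDerivAt (fun t : ℝ => Complex.exp (lam * p + lam ^ 2 * t))
      (Complex.exp (lam * p + lam ^ 2 * t) * lam ^ 2) t := by
  have h : HasDerivAt (fun t : ℝ => lam * (p : ℂ) + lam ^ 2 * t) (lam ^ 2) t := by
    simpa using ((hasDerivAt_id t).ofReal_comp.const_mul (lam ^ 2)).const_add (lam * (p : ℂ))
  exact h.cexp

/-- The Sato normalized eigenfunction satisfies the Lax equation
`(−∂_{x₂} + ∂²_{x₁} + 2λ∂_{x₁} + u_s)χ = 0`, and the Sato eigenfunction satisfies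
`(−∂_{x₂} + ∂²_{x₁} + u_s)φ = 0`. -/
theorem sato_eigenfunction_satisfies_Lax (κ₁ κ₂ a : ℝ) (hκ : κ₁ < κ₂) (ha : 0 < a) :
    ∀ lam : ℂ, lam ≠ 0 → ∀ x : ℝ × ℝ × ℝ,
      (- p2 (fun y => chi κ₁ κ₂ a y lam) x
        + p1 (p1 (fun y => chi κ₁ κ₂ a y lam)) x
        + 2 * lam * p1 (fun y => chi κ₁ κ₂ a y lam) x
        + (us κ₁ κ₂ a x : ℂ) * chi κ₁ κ₂ a x lam = 0)
      ∧ (- p2 (fun y => satoPhi κ₁ κ₂ a y lam) x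
        + p1 (p1 (fun y => satoPhi κ₁ κ₂ a y lam)) x
        + (us κ₁ κ₂ a x : ℂ) * satoPhi κ₁ κ₂ a x lam = 0) := by
  intro lam hl x
  have e1 : p1 (fun y => chi κ₁ κ₂ a y lam) = c1 κ₁ κ₂ a lam := by
    funext ⟨p, q, r⟩
    exact (hchi1 κ₁ κ₂ a ha lam hl p q r).deriv
  have f1 : p1 (fun y => satoPhi κ₁ κ₂ a y lam) = fun y =>
      Complex.exp (lam * y.1 + lam ^ 2 * y.2.1) * lam * chi κ₁ κ₂ a y lam
        + Complex.exp (lam * y.1 + lam ^ 2 * y.2.1) * c1 κ₁ κ₂ a lam y := by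
    funext ⟨p, q, r⟩
    exact ((hE1 lam p q).mul (hchi1 κ₁ κ₂ a ha lam hl p q r)).deriv
  have key := lax_alg κ₁ κ₂ a ha lam hl x
  obtain ⟨p, q, r⟩ := x
  have e2 : p2 (fun y => chi κ₁ κ₂ a y lam) (p, q, r)
      = (κ₁ + κ₂) * c1 κ₁ κ₂ a lam (p, q, r) :=
    (hchi2 κ₁ κ₂ a ha lam hl p q r).deriv
  have e11 : p1 (c1 κ₁ κ₂ a lam) (p, q, r) = c11 κ₁ κ₂ a lam (p, q, r) :=
    (hchi11 κ₁ κ₂ a ha lam hl p q r).deriv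
  refine ⟨by rw [e1, e2, e11]; exact key, ?_⟩
  have f2 : p2 (fun y => satoPhi κ₁ κ₂ a y lam) (p, q, r) = _ :=
    ((hE2 lam p q).mul (hchi2 κ₁ κ₂ a ha lam hl p q r)).deriv
  have f11 := ((((hE1 lam p q).mul_const lam).mul (hchi1 κ₁ κ₂ a ha lam hl p q r)).add
    ((hE1 lam p q).mul (hchi11 κ₁ κ₂ a ha lam hl p q r))).deriv
  rw [f1, f2]
  have f11' : p1 (fun y : ℝ × ℝ × ℝ =>
      Complex.exp (lam * y.1 + lam ^ 2 * y.2.1) * lam * chi κ₁ κ₂ a y lam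
        + Complex.exp (lam * y.1 + lam ^ 2 * y.2.1) * c1 κ₁ κ₂ a lam y) (p, q, r) = _ := f11
  rw [f11']
  simp only [satoPhi]
  linear_combination Complex.exp (lam * p + lam ^ 2 * q) * key
end
end

section
/- For all x, x' ∈ ℝ³ with x₃ = x₃', the orthogonality relation φ₁(x)ψ₁(x') + φ₂(x)ψ₂(x') = 0 holds. -/
noncomputable section

/-- Value of the Sato eigenfunction at `κ₁`. -/
def phi1 (κ₁ κ₂ a : ℝ) (x : ℝ × ℝ × ℝ) : ℝ :=
  Real.exp (κ₁ * x.1 + κ₁ ^ 2 * x.2.1) * (1 - κ₂ / κ₁) * a * Real.exp (theta κ₂ x)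
    / tau κ₁ κ₂ a x

/-- Value of the Sato eigenfunction at `κ₂`. -/
def phi2 (κ₁ κ₂ a : ℝ) (x : ℝ × ℝ × ℝ) : ℝ :=
  Real.exp (κ₂ * x.1 + κ₂ ^ 2 * x.2.1) * (1 - κ₁ / κ₂) * Real.exp (theta κ₁ x)
    / tau κ₁ κ₂ a x

/-- Residue of the Sato adjoint eigenfunction at `κ₁`. -/
def psi1 (κ₁ κ₂ a : ℝ) (x : ℝ × ℝ × ℝ) : ℝ :=
  κ₁ * Real.exp (-(κ₁ * x.1 + κ₁ ^ 2 * x.2.1)) * Real.exp (theta κ₁ x)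
    / tau κ₁ κ₂ a x

/-- Residue of the Sato adjoint eigenfunction at `κ₂`. -/
def psi2 (κ₁ κ₂ a : ℝ) (x : ℝ × ℝ × ℝ) : ℝ :=
  a * κ₂ * Real.exp (-(κ₂ * x.1 + κ₂ ^ 2 * x.2.1)) * Real.exp (theta κ₂ x)
    / tau κ₁ κ₂ a x

/-- Orthogonality relation `φ₁(x)ψ₁(x') + φ₂(x)ψ₂(x') = 0` for `x₃ = x₃'`. -/
theorem sato_orthogonality (κ₁ κ₂ a : ℝ) (hκ : κ₁ < κ₂)
    (hκ₁ : κ₁ ≠ 0) (hκ₂ : κ₂ ≠ 0) (ha : 0 < a) :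
    ∀ x x' : ℝ × ℝ × ℝ, x.2.2 = x'.2.2 →
      phi1 κ₁ κ₂ a x * psi1 κ₁ κ₂ a x' + phi2 κ₁ κ₂ a x * psi2 κ₁ κ₂ a x' = 0 := by
  rintro ⟨x1, x2, x3⟩ ⟨y1, y2, y3⟩ h
  simp only at h
  subst h
  simp only [phi1, phi2, psi1, psi2]
  generalize tau κ₁ κ₂ a (x1, x2, x3) = T
  generalize tau κ₁ κ₂ a (y1, y2, x3) = S
  simp only [theta, Real.exp_add (_ + _) _, Real.exp_neg]
  have e1 := Real.exp_ne_zero (κ₁ * y1 + κ₁ ^ 2 * y2)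
  have e2 := Real.exp_ne_zero (κ₂ * y1 + κ₂ ^ 2 * y2)
  have f1 : (1 - κ₂ / κ₁) * κ₁ = κ₁ - κ₂ := by field_simp
  have f2 : (1 - κ₁ / κ₂) * κ₂ = κ₂ - κ₁ := by field_simp
  generalize Real.exp (κ₁ * y1 + κ₁ ^ 2 * y2) = B1 at *
  generalize Real.exp (κ₂ * y1 + κ₂ ^ 2 * y2) = B2 at *
  generalize Real.exp (κ₁ * x1 + κ₁ ^ 2 * x2) = A1
  generalize Real.exp (κ₂ * x1 + κ₂ ^ 2 * x2) = A2
  generalize Real.exp (κ₁ ^ 3 * x3) = C1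
  generalize Real.exp (κ₂ ^ 3 * x3) = C2
  have g1 : B1⁻¹ * B1 = 1 := inv_mul_cancel₀ e1
  have g2 : B2⁻¹ * B2 = 1 := inv_mul_cancel₀ e2
  calc _ = A1 * A2 * C1 * C2 * a * T⁻¹ * S⁻¹ *
        ((1 - κ₂ / κ₁) * κ₁ * (B1⁻¹ * B1) + (1 - κ₁ / κ₂) * κ₂ * (B2⁻¹ * B2)) := by
        simp only [div_eq_mul_inv _ T, div_eq_mul_inv _ S]
        generalize 1 - κ₂ / κ₁ = u
        generalize 1 - κ₁ / κ₂ = v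
        generalize B1⁻¹ = b1
        generalize B2⁻¹ = b2
        ring
    _ = 0 := by rw [f1, f2, g1, g2]; ring
end
end

section
/- There exists a constant C > 0 such that for every measurable s_c : ℂ → ℂ and every λ ∈ ℂ: ∬_ℂ |s_c(ζ)|·|ζ−λ|^{−1} dA(ζ) ≤ C·(‖S‖_{L²(ℝ²)} + ‖S‖_{L∞(ℝ²)}). Consequently, for every bounded measurable φ : ℂ → ℂ, every x ∈ ℝ³ and every λ ∈ ℂ, the Cauchy integral of the continuous scattering operator satisfies |∬_ℂ s_c(ζ)·e^{(ζ̄−ζ)x₁+(ζ̄²−ζ²)x₂+(ζ̄³−ζ³)x₃}·φ(ζ̄)·(ζ−λ)^{−1} dA(ζ)| ≤ C·‖φ‖_{L∞}·(‖S‖_{L²(ℝ²)} + ‖S‖_{L∞(ℝ²)}). -/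
open Complex MeasureTheory
open scoped ENNReal NNReal

noncomputable section

/-- The change of variables `ζ(ξ,η) = −iπξ + η/(2ξ)`. -/
def zeta (p : ℝ × ℝ) : ℂ :=
  -(Real.pi : ℂ) * p.1 * Complex.I + (p.2 : ℂ) / (2 * p.1)

/-- `S(ξ,η) = s_c(ζ(ξ,η))`. -/
def Sfun (sc : ℂ → ℂ) (p : ℝ × ℝ) : ℂ := sc (zeta p)

/-- The phase `(ζ̄−ζ)x₁+(ζ̄²−ζ²)x₂+(ζ̄³−ζ³)x₃`. -/
def phase (x : ℝ × ℝ × ℝ) (ζ : ℂ) : ℂ :=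
  ((starRingEnd ℂ) ζ - ζ) * x.1 + (((starRingEnd ℂ) ζ) ^ 2 - ζ ^ 2) * x.2.1
    + (((starRingEnd ℂ) ζ) ^ 3 - ζ ^ 3) * x.2.2

/-- One-dimensional integrable majorant. -/
def fker (t : ℝ) : ℝ := if |t| ≤ 1 then |t| ^ (-(3/4) : ℝ) else |t| ^ (-(5/4) : ℝ)

lemma fker_nonneg (t : ℝ) : 0 ≤ fker t := by
  unfold fker; split_ifs <;> positivity

lemma fker_measurable : Measurable fker := by
  unfold fker
  refine Measurable.ite (measurableSet_le (by fun_prop) (by fun_prop)) ?_ ?_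
  · exact (continuous_abs.measurable).pow_const _
  · exact (continuous_abs.measurable).pow_const _

lemma fker_integrable : Integrable fker := by
  have h1 : IntegrableOn fker (Set.Ioc 0 1) := by
    have h := (intervalIntegral.intervalIntegrable_rpow' (a := 0) (b := 1)
      (r := (-(3/4) : ℝ)) (by norm_num)).1
    refine h.congr_fun (fun x hx => ?_) measurableSet_Ioc
    simp [fker, abs_of_pos hx.1, hx.2]
  have h2 : IntegrableOn fker (Set.Ioi 1) := by
    have h := integrableOn_Ioi_rpow_of_lt (a := (-(5/4) : ℝ)) (c := 1) (by norm_num) (by norm_num)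
    refine h.congr_fun (fun x hx => ?_) measurableSet_Ioi
    have hx' : (1 : ℝ) < x := hx
    simp [fker, abs_of_pos (show (0:ℝ) < x by linarith), not_le.2 hx']
  have h3 : IntegrableOn fker (Set.Ioi 0) := by
    rw [← Set.Ioc_union_Ioi_eq_Ioi (zero_le_one' ℝ)]
    exact h1.union h2
  have h4 : Integrable ((Set.Ioi 0).indicator fker) := h3.integrable_indicator measurableSet_Ioi
  have h5 := h4.add h4.comp_neg
  refine h5.congr ?_
  have : ∀ᵐ t : ℝ, t ≠ 0 := by simp [ae_iff]
  filter_upwards [this] with t ht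
  rcases lt_or_gt_of_ne ht with h | h
  · simp [Set.indicator, h, not_lt.2 h.le, fker]
  · simp [Set.indicator, h, not_lt.2 h.le, fker]

lemma fker_pow (X : ℝ) (hX : 0 < X) :
    fker (X ^ 4) = if X ≤ 1 then (X ^ 3)⁻¹ else (X ^ 5)⁻¹ := by
  unfold fker
  have e : |X ^ 4| = X ^ 4 := abs_of_pos (by positivity)
  have e1 : X ^ 4 ≤ 1 ↔ X ≤ 1 := pow_le_one_iff_of_nonneg hX.le (by norm_num)
  rw [e]
  simp only [e1]
  congr 1
  · rw [← Real.rpow_natCast, ← Real.rpow_mul hX.le, ← Real.rpow_natCast, ← Real.rpow_neg hX.le]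
    norm_num
  · rw [← Real.rpow_natCast, ← Real.rpow_mul hX.le, ← Real.rpow_natCast, ← Real.rpow_neg hX.le]
    norm_num

lemma ker_bound_pow (X M R : ℝ) (hX : 0 < X) (hM : 0 < M) (hXR : X ≤ R) (hMR : M ≤ R) :
    (R ^ 4)⁻¹ ≤ fker (X ^ 4) * fker (M ^ 4) ∨
      (M ^ 4 * (R ^ 4) ^ 2)⁻¹ ≤ fker (X ^ 4) * fker (M ^ 4) := by
  have hR : 0 < R := hX.trans_le hXR
  rw [fker_pow X hX, fker_pow M hM]
  by_cases h1 : X ≤ 1 <;> by_cases h2 : M ≤ 1 <;> simp only [h1, h2, if_true, if_false] <;>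
    rw [← mul_inv]
  · left
    apply inv_anti₀ (by positivity)
    calc X ^ 3 * M ^ 3 = (X ^ 3 * M) * M ^ 2 := by ring
      _ ≤ (R ^ 3 * R) * 1 := by gcongr; exact pow_le_one₀ hM.le h2
      _ = R ^ 4 := by ring
  · right
    push Not at h2
    apply inv_anti₀ (by positivity)
    have hR1 : 1 ≤ R := h2.le.trans hMR
    calc X ^ 3 * M ^ 5 = X ^ 3 * (M ^ 4 * M) := by ring
      _ ≤ 1 * (M ^ 4 * R) := by gcongr; exact pow_le_one₀ hX.le h1
      _ = M ^ 4 * (R * 1) := by ring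
      _ ≤ M ^ 4 * (R * R ^ 7) := by gcongr; exact one_le_pow₀ hR1
      _ = _ := by ring
  · push Not at h1
    have hR1 : 1 ≤ R := h1.le.trans hXR
    by_cases h3 : M * R ≤ 1
    · left
      apply inv_anti₀ (by positivity)
      calc X ^ 5 * M ^ 3 ≤ R ^ 5 * M ^ 3 := by gcongr
        _ = R ^ 4 * (M * R) * M ^ 2 := by ring
        _ ≤ R ^ 4 * 1 * 1 := by gcongr; exact pow_le_one₀ hM.le h2
        _ = _ := by ring
    · right
      push Not at h3
      apply inv_anti₀ (by positivity)
      calc X ^ 5 * M ^ 3 ≤ R ^ 5 * M ^ 3 * 1 * 1 := by rw [mul_one, mul_one]; gcongr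
        _ ≤ R ^ 5 * M ^ 3 * (M * R) * R ^ 2 := by
          gcongr
          exact one_le_pow₀ hR1
        _ = _ := by ring
  · right
    push Not at h1 h2
    have hR1 : 1 ≤ R := h1.le.trans hXR
    apply inv_anti₀ (by positivity)
    calc X ^ 5 * M ^ 5 = X ^ 5 * M * M ^ 4 := by ring
      _ ≤ R ^ 5 * R * M ^ 4 * 1 := by rw [mul_one]; gcongr
      _ ≤ R ^ 5 * R * M ^ 4 * R ^ 2 := by gcongr; exact one_le_pow₀ hR1
      _ = _ := by ring

lemma ker_bound (x m r : ℝ) (hx : 0 < x) (hm : 0 < m) (hxr : x ≤ r) (hmr : m ≤ r) :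
    r⁻¹ ≤ fker x * fker m ∨ (m * r ^ 2)⁻¹ ≤ fker x * fker m := by
  have key : ∀ y : ℝ, 0 < y → ((y ^ (1/4 : ℝ)) ^ 4) = y := by
    intro y hy
    rw [← Real.rpow_natCast, ← Real.rpow_mul hy.le]; norm_num
  have := ker_bound_pow (x ^ (1/4 : ℝ)) (m ^ (1/4 : ℝ)) (r ^ (1/4 : ℝ))
    (by positivity) (by positivity) (by gcongr) (by gcongr)
  rwa [key x hx, key m hm, key r (hx.trans_le hxr)] at this

lemma fker_abs (t : ℝ) : fker |t| = fker t := by simp [fker]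

lemma pointwise_bound (a t : ℝ) (ha : 0 ≤ a) (ht : 0 < t) (hat : a ≤ t) (ζ lam : ℂ)
    (h1 : ζ.re - lam.re ≠ 0) (h2 : ζ.im ≠ 0) (h3 : ζ.im - lam.im ≠ 0) :
    a / ‖ζ - lam‖ ≤ a ^ 2 * |ζ.im| / t + t * (fker (ζ.re - lam.re) * fker ζ.im
      + fker (ζ.re - lam.re) * fker (ζ.im - lam.im)) := by
  set r := ‖ζ - lam‖ with hr
  have hxr : |ζ.re - lam.re| ≤ r := by simpa using Complex.abs_re_le_norm (ζ - lam)
  have hyr : |ζ.im - lam.im| ≤ r := by simpa using Complex.abs_im_le_norm (ζ - lam)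
  have hx0 : 0 < |ζ.re - lam.re| := abs_pos.2 h1
  have hv : 0 < |ζ.im| := abs_pos.2 h2
  have hr0 : 0 < r := hx0.trans_le hxr
  set m := min |ζ.im| |ζ.im - lam.im| with hm
  have hm0 : 0 < m := lt_min hv (abs_pos.2 h3)
  have hk := ker_bound _ m r hx0 hm0 hxr ((min_le_right _ _).trans hyr)
  rw [fker_abs] at hk
  set K := fker (ζ.re - lam.re) * fker ζ.im
      + fker (ζ.re - lam.re) * fker (ζ.im - lam.im) with hK
  have hle : fker (ζ.re - lam.re) * fker m ≤ K := by
    have p1 := mul_nonneg (fker_nonneg (ζ.re - lam.re)) (fker_nonneg ζ.im)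
    have p2 := mul_nonneg (fker_nonneg (ζ.re - lam.re)) (fker_nonneg (ζ.im - lam.im))
    rcases min_choice |ζ.im| |ζ.im - lam.im| with h | h <;> rw [hm, h, fker_abs] <;> linarith
  rcases hk with hk | hk
  · have : a / r ≤ t * K := by
      rw [div_eq_mul_inv]
      exact mul_le_mul hat (hk.trans hle) (by positivity) ht.le
    have : 0 ≤ a ^ 2 * |ζ.im| / t := by positivity
    linarith
  · have hk' : (|ζ.im| * r ^ 2)⁻¹ ≤ K := by
      refine le_trans ?_ (hk.trans hle)
      apply inv_anti₀ (by positivity)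
      gcongr
      exact min_le_left _ _
    have h4 : t * (|ζ.im| * r ^ 2)⁻¹ ≤ t * K := by gcongr
    refine le_trans ?_ (add_le_add le_rfl h4)
    set v := |ζ.im|
    have : a ^ 2 * v / t + t * (v * r ^ 2)⁻¹ - a / r
        = ((a * v * r - t) ^ 2 + a * v * r * t) / (t * v * r ^ 2) := by
      field_simp; ring
    have h5 : 0 ≤ ((a * v * r - t) ^ 2 + a * v * r * t) / (t * v * r ^ 2) := by positivity
    linarith

lemma lintegral_scale (c : ℝ) (hc : c ≠ 0) (G : ℝ → ℝ≥0∞) (hG : Measurable G) :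
    ∫⁻ y, G (c * y) = ENNReal.ofReal |c⁻¹| * ∫⁻ u, G u := by
  rw [← lintegral_map hG (by fun_prop : Measurable fun y : ℝ => c * y),
    Real.map_volume_mul_left hc, lintegral_smul_measure, smul_eq_mul]

lemma lintegral_complex (G : ℂ → ℝ≥0∞) :
    ∫⁻ z, G z = ∫⁻ p : ℝ × ℝ, G (Complex.mk p.1 p.2) := by
  rw [← (Complex.volume_preserving_equiv_real_prod.symm).lintegral_comp_emb
    Complex.measurableEquivRealProd.symm.measurableEmbedding]
  rfl

lemma mk_measurable : Measurable (fun p : ℝ × ℝ => Complex.mk p.1 p.2) :=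
  Complex.measurableEquivRealProd.symm.measurable

lemma zeta_eq (p : ℝ × ℝ) : zeta p = Complex.mk ((2 * p.1)⁻¹ * p.2) (-Real.pi * p.1) := by
  have : (p.2 : ℂ) / (2 * p.1) = (((2 * p.1)⁻¹ * p.2 : ℝ) : ℂ) := by
    push_cast; ring
  unfold zeta
  rw [this]
  have h2 : -(Real.pi : ℂ) * p.1 * Complex.I = ((-Real.pi * p.1 : ℝ) : ℂ) * Complex.I := by
    push_cast; ring
  rw [h2, Complex.mk_eq_add_mul_I, add_comm]

lemma change_vars (F : ℂ → ℝ≥0∞) (hF : Measurable F) :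
    ∫⁻ p, F (zeta p) = ∫⁻ z : ℂ, ENNReal.ofReal (2 / Real.pi ^ 2 * |z.im|) * F z := by
  have hF' : Measurable fun p : ℝ × ℝ => F (Complex.mk p.1 p.2) := hF.comp mk_measurable
  have hF2 : Measurable fun v : ℝ => ∫⁻ u, F (Complex.mk u v) :=
    Measurable.lintegral_prod_left' hF'
  have hz : Measurable zeta := by unfold zeta; fun_prop
  have hm : Measurable fun p : ℝ × ℝ => ENNReal.ofReal (2 / Real.pi ^ 2 * |p.2|) := by fun_prop
  have hG : Measurable fun v : ℝ =>
      ENNReal.ofReal (2 / Real.pi * |v|) * ∫⁻ u, F (Complex.mk u v) :=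
    Measurable.mul (by fun_prop) hF2
  rw [lintegral_complex, Measure.volume_eq_prod, lintegral_prod (fun p => F (zeta p)) (hF.comp hz).aemeasurable,
    lintegral_prod_symm (fun p : ℝ × ℝ => ENNReal.ofReal (2 / Real.pi ^ 2 * |p.2|)
      * F (Complex.mk p.1 p.2)) (Measurable.aemeasurable (hm.mul hF'))]
  have hae : ∀ᵐ t : ℝ, t ≠ 0 := by simp [ae_iff]
  have e1 : ∫⁻ x : ℝ, ∫⁻ y : ℝ, F (zeta (x, y)) =
      ∫⁻ x : ℝ, (fun v : ℝ => ENNReal.ofReal (2 / Real.pi * |v|) * ∫⁻ u, F (Complex.mk u v))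
        (-Real.pi * x) := by
    refine lintegral_congr_ae ?_
    filter_upwards [hae] with x hx
    simp only [zeta_eq]
    rw [lintegral_scale (2 * x)⁻¹ (by positivity) (fun u => F ⟨u, -Real.pi * x⟩)
      (hF'.comp (measurable_id.prodMk measurable_const))]
    congr 2
    rw [inv_inv, abs_mul, abs_mul, abs_neg, abs_of_pos Real.pi_pos, abs_of_pos (zero_lt_two' ℝ)]
    field_simp [Real.pi_ne_zero]
  rw [e1, lintegral_scale _ (by simp [Real.pi_ne_zero]) _ hG,
    ← lintegral_const_mul _ hG]
  refine lintegral_congr fun v => ?_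
  have hv : Measurable fun u : ℝ => F (Complex.mk u v) :=
    hF'.comp (measurable_id.prodMk measurable_const)
  dsimp only
  rw [lintegral_const_mul _ hv, ← mul_assoc,
    ← ENNReal.ofReal_mul (abs_nonneg _)]
  congr 2
  rw [abs_inv, abs_neg, abs_of_pos Real.pi_pos]
  field_simp [Real.pi_ne_zero]

lemma ae_re_ne (c : ℝ) : ∀ᵐ z : ℂ, z.re - c ≠ 0 := by
  have hae : ∀ᵐ t : ℝ, t ≠ c := by simp [ae_iff]
  have h := (Measure.quasiMeasurePreserving_fst (μ := (volume : Measure ℝ))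
    (ν := (volume : Measure ℝ))).comp
    Complex.volume_preserving_equiv_real_prod.quasiMeasurePreserving
  filter_upwards [h.ae hae] with z hz
  exact sub_ne_zero.2 hz

lemma ae_im_ne (c : ℝ) : ∀ᵐ z : ℂ, z.im - c ≠ 0 := by
  have hae : ∀ᵐ t : ℝ, t ≠ c := by simp [ae_iff]
  have h := (Measure.quasiMeasurePreserving_snd (μ := (volume : Measure ℝ))
    (ν := (volume : Measure ℝ))).comp
    Complex.volume_preserving_equiv_real_prod.quasiMeasurePreserving
  filter_upwards [h.ae hae] with z hz
  exact sub_ne_zero.2 hz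

lemma sup_bound (sc : ℂ → ℂ) (hsc : Measurable sc) :
    ∀ᵐ z : ℂ, ‖sc z‖ₑ ≤ eLpNorm (Sfun sc) ⊤ volume := by
  set M := eLpNorm (Sfun sc) ⊤ volume with hM
  have h1 : ∀ᵐ p : ℝ × ℝ, ‖sc (zeta p)‖ₑ ≤ M := by
    rw [hM, eLpNorm_exponent_top]
    exact ae_le_eLpNormEssSup (f := Sfun sc)
  let F : ℂ → ℝ≥0∞ := {z | M < ‖sc z‖ₑ}.indicator 1
  have hF : Measurable F :=
    measurable_one.indicator (measurableSet_lt measurable_const hsc.enorm)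
  have h2 := change_vars F hF
  have h3 : ∫⁻ p, F (zeta p) = 0 := by
    rw [lintegral_eq_zero_iff' ?_]
    · filter_upwards [h1] with p hp
      simp [F, hp]
    · exact (hF.comp (by unfold zeta; fun_prop)).aemeasurable
  rw [h3, eq_comm, lintegral_eq_zero_iff (by fun_prop)] at h2
  filter_upwards [h2, ae_im_ne 0] with z hz hz'
  by_contra hcon
  have hlt : M < ‖sc z‖ₑ := not_le.1 hcon
  have hpos : 0 < 2 / Real.pi ^ 2 * |z.im| := by
    have := Real.pi_pos
    have : 0 < |z.im| := abs_pos.2 (by simpa using hz')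
    positivity
  simp only [Pi.zero_apply, mul_eq_zero, ENNReal.ofReal_eq_zero] at hz
  rcases hz with hz | hz
  · linarith
  · simp [F, hlt] at hz

lemma l2_eq (sc : ℂ → ℂ) (hsc : Measurable sc) :
    ∫⁻ z : ℂ, ENNReal.ofReal (2 / Real.pi ^ 2 * |z.im|) * ‖sc z‖ₑ ^ 2
      = eLpNorm (Sfun sc) 2 volume ^ 2 := by
  rw [← change_vars (fun z => ‖sc z‖ₑ ^ 2) (by fun_prop),
    eLpNorm_eq_lintegral_rpow_enorm_toReal (by norm_num) (by norm_num), ← ENNReal.rpow_natCast,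
    ← ENNReal.rpow_mul]
  simp [Sfun]

/-- The mass of the majorant. -/
def Imass : ℝ≥0∞ := ∫⁻ t : ℝ, ENNReal.ofReal (fker t)

lemma Imass_ne_top : Imass ≠ ⊤ := fker_integrable.lintegral_lt_top.ne

lemma ker_lintegral (a b : ℝ) :
    ∫⁻ z : ℂ, ENNReal.ofReal (fker (z.re - a)) * ENNReal.ofReal (fker (z.im - b))
      = Imass * Imass := by
  have hf := fker_measurable
  rw [lintegral_complex, Measure.volume_eq_prod,
    lintegral_prod_mul (f := fun x => ENNReal.ofReal (fker (x - a)))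
      (g := fun x => ENNReal.ofReal (fker (x - b))) (by fun_prop) (by fun_prop),
    lintegral_sub_right_eq_self (fun x => ENNReal.ofReal (fker x)) a,
    lintegral_sub_right_eq_self (fun x => ENNReal.ofReal (fker x)) b]
  rfl

lemma first_estimate (sc : ℂ → ℂ) (hsc : Measurable sc) (lam : ℂ) :
    ∫⁻ ζ : ℂ, (‖sc ζ‖₊ : ℝ≥0∞) / (‖ζ - lam‖₊ : ℝ≥0∞)
      ≤ ENNReal.ofReal (Real.pi ^ 2 / 2 + (Imass * Imass + Imass * Imass).toReal)
        * (eLpNorm (Sfun sc) 2 volume + eLpNorm (Sfun sc) ⊤ volume) := by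
  have hpi := Real.pi_pos
  have hf := fker_measurable
  have hsup := sup_bound sc hsc
  have hl2 := l2_eq sc hsc
  set N := eLpNorm (Sfun sc) 2 volume
  set M := eLpNorm (Sfun sc) ⊤ volume
  have hC : 0 < Real.pi ^ 2 / 2 + (Imass * Imass + Imass * Imass).toReal := by positivity
  by_cases htop : N + M = ⊤
  · rw [htop, ENNReal.mul_top (by simpa using hC)]
    exact le_top
  by_cases hzero : N + M = 0
  · have hM : M = 0 := (add_eq_zero.1 hzero).2
    refine le_trans (le_of_eq ?_) zero_le
    rw [lintegral_eq_zero_iff' (by fun_prop)]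
    filter_upwards [hsup] with z hz
    rw [hM] at hz
    have : sc z = 0 := by simpa using hz
    simp [this]
  obtain ⟨t, ht⟩ : ∃ t : ℝ, t = (N + M).toReal := ⟨_, rfl⟩
  have ht0 : 0 < t := ht ▸ ENNReal.toReal_pos hzero htop
  have hT : N + M = ENNReal.ofReal t := by rw [ht, ENNReal.ofReal_toReal htop]
  rw [hT]
  have hJ : Imass * Imass + Imass * Imass ≠ ⊤ := by
    simp [ENNReal.mul_eq_top, Imass_ne_top]
  calc ∫⁻ ζ : ℂ, (‖sc ζ‖₊ : ℝ≥0∞) / (‖ζ - lam‖₊ : ℝ≥0∞)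
      ≤ ∫⁻ ζ : ℂ, (ENNReal.ofReal (Real.pi ^ 2 / 2 / t)
            * (ENNReal.ofReal (2 / Real.pi ^ 2 * |ζ.im|) * ‖sc ζ‖ₑ ^ 2)
          + ENNReal.ofReal t *
            (ENNReal.ofReal (fker (ζ.re - lam.re)) * ENNReal.ofReal (fker (ζ.im - 0))
            + ENNReal.ofReal (fker (ζ.re - lam.re)) * ENNReal.ofReal (fker (ζ.im - lam.im)))) := by
        refine lintegral_mono_ae ?_
        filter_upwards [hsup, ae_re_ne lam.re, ae_im_ne 0, ae_im_ne lam.im] with z hz h1 h2 h3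
        have hz' : ‖sc z‖ ≤ t := by
          have : ‖sc z‖ₑ ≤ ENNReal.ofReal t := hT ▸ hz.trans le_add_self
          rw [← ofReal_norm] at this
          exact (ENNReal.ofReal_le_ofReal_iff ht0.le).1 this
        have hne : 0 < ‖z - lam‖ := by
          rw [norm_pos_iff]
          intro h
          apply h1
          simpa using congrArg Complex.re h
        have hb := pointwise_bound ‖sc z‖ t (norm_nonneg _) ht0 hz' z lam h1
          (by simpa using h2) h3
        have e1 : (‖sc z‖₊ : ℝ≥0∞) / (‖z - lam‖₊ : ℝ≥0∞)
            = ENNReal.ofReal (‖sc z‖ / ‖z - lam‖) := by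
          rw [ENNReal.ofReal_div_of_pos hne, ofReal_norm, ofReal_norm]
          rfl
        rw [e1, sub_zero, ← ofReal_norm]
        refine (ENNReal.ofReal_le_ofReal hb).trans (le_of_eq ?_)
        have q1 := fker_nonneg (z.re - lam.re)
        have q2 := fker_nonneg z.im
        have q3 := fker_nonneg (z.im - lam.im)
        rw [← ENNReal.ofReal_pow (norm_nonneg _), ← ENNReal.ofReal_mul (by positivity),
          ← ENNReal.ofReal_mul (by positivity), ← ENNReal.ofReal_mul q1, ← ENNReal.ofReal_mul q1,
          ← ENNReal.ofReal_add (by positivity) (by positivity),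
          ← ENNReal.ofReal_mul (by positivity),
          ← ENNReal.ofReal_add (by positivity) (by positivity)]
        congr 2
        field_simp
    _ = ENNReal.ofReal (Real.pi ^ 2 / 2 / t) * N ^ 2
          + ENNReal.ofReal t * (Imass * Imass + Imass * Imass) := by
        rw [lintegral_add_left (by fun_prop), lintegral_const_mul _ (by fun_prop),
          lintegral_const_mul _ (by fun_prop), lintegral_add_left (by fun_prop),
          ker_lintegral, ker_lintegral, hl2]
    _ ≤ ENNReal.ofReal (Real.pi ^ 2 / 2 / t) * ENNReal.ofReal t ^ 2
          + ENNReal.ofReal t * (Imass * Imass + Imass * Imass) := by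
        gcongr
        rw [← hT]
        exact le_self_add
    _ = _ := by
        rw [ENNReal.ofReal_add (by positivity) (by positivity), ENNReal.ofReal_toReal hJ, add_mul,
          ← ENNReal.ofReal_pow ht0.le, ← ENNReal.ofReal_mul (by positivity),
          ← ENNReal.ofReal_mul (by positivity), mul_comm (ENNReal.ofReal t)]
        congr 2
        field_simp

lemma norm_exp_phase (x : ℝ × ℝ × ℝ) (ζ : ℂ) : ‖Complex.exp (phase x ζ)‖ = 1 := by
  have : (phase x ζ).re = 0 := by
    simp [phase, pow_succ]
    left
    ring
  rw [Complex.norm_exp, this, Real.exp_zero]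

/-- The basic estimate for the Cauchy integral of the continuous scattering operator:
`∬ |s_c(ζ)|/|ζ−λ| ≤ C(‖S‖_{L²}+‖S‖_{L∞})`, and hence
`|∬ s_c(ζ)e^{phase}φ(ζ̄)(ζ−λ)⁻¹| ≤ C‖φ‖_{L∞}(‖S‖_{L²}+‖S‖_{L∞})`. -/
theorem cauchy_integral_estimate :
    ∃ C : ℝ, 0 < C ∧ ∀ sc : ℂ → ℂ, Measurable sc → ∀ lam : ℂ,
      ((∫⁻ ζ : ℂ, (‖sc ζ‖₊ : ℝ≥0∞) / (‖ζ - lam‖₊ : ℝ≥0∞))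
          ≤ ENNReal.ofReal C
            * (eLpNorm (Sfun sc) 2 volume + eLpNorm (Sfun sc) ⊤ volume))
      ∧ ∀ φ : ℂ → ℂ, Measurable φ → ∀ B : ℝ, (∀ ζ : ℂ, ‖φ ζ‖ ≤ B) →
          ∀ x : ℝ × ℝ × ℝ,
            ENNReal.ofReal
                ‖∫ ζ : ℂ, sc ζ * Complex.exp (phase x ζ)
                    * φ ((starRingEnd ℂ) ζ) / (ζ - lam)‖
              ≤ ENNReal.ofReal (C * B)
                * (eLpNorm (Sfun sc) 2 volume + eLpNorm (Sfun sc) ⊤ volume) := by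
  have hpi := Real.pi_pos
  have hC : 0 < Real.pi ^ 2 / 2 + (Imass * Imass + Imass * Imass).toReal := by positivity
  refine ⟨_, hC, fun sc hsc lam => ⟨first_estimate sc hsc lam, fun φ hφ B hB x => ?_⟩⟩
  have hB0 : 0 ≤ B := (norm_nonneg _).trans (hB 0)
  have h1 := first_estimate sc hsc lam
  rw [ofReal_norm]
  refine (enorm_integral_le_lintegral_enorm _).trans ?_
  calc ∫⁻ ζ : ℂ, ‖sc ζ * Complex.exp (phase x ζ) * φ ((starRingEnd ℂ) ζ) / (ζ - lam)‖ₑ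
      ≤ ∫⁻ ζ : ℂ, ENNReal.ofReal B * ((‖sc ζ‖₊ : ℝ≥0∞) / (‖ζ - lam‖₊ : ℝ≥0∞)) := by
        refine lintegral_mono fun ζ => ?_
        by_cases h : ζ - lam = 0
        · simp [h]
        · have hne : 0 < ‖ζ - lam‖ := norm_pos_iff.2 h
          have e1 : (‖sc ζ‖₊ : ℝ≥0∞) / (‖ζ - lam‖₊ : ℝ≥0∞)
              = ENNReal.ofReal (‖sc ζ‖ / ‖ζ - lam‖) := by
            rw [ENNReal.ofReal_div_of_pos hne, ofReal_norm, ofReal_norm]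
            rfl
          rw [e1, ← ENNReal.ofReal_mul hB0, ← ofReal_norm]
          apply ENNReal.ofReal_le_ofReal
          rw [norm_div, norm_mul, norm_mul, norm_exp_phase, mul_one, mul_div_assoc', mul_comm B]
          gcongr
          exact hB _
    _ = ENNReal.ofReal B * ∫⁻ ζ : ℂ, (‖sc ζ‖₊ : ℝ≥0∞) / (‖ζ - lam‖₊ : ℝ≥0∞) :=
        lintegral_const_mul _ (by fun_prop)
    _ ≤ _ := by
        rw [ENNReal.ofReal_mul hC.le, mul_comm (ENNReal.ofReal _) (ENNReal.ofReal B), mul_assoc]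
        gcongr
end
end
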